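/- Define F₀ on ℝ² \ {0} (Euclidean plane) by F₀(y) = ((‖y‖/2 + 1)/‖y‖) • y. Fix x ≠ 0, set r = ‖x‖ and s = r/2 + 1, and let T be the Fréchet derivative of F₀ at x. Then: F₀ is differentiable at x; the determinant J of T (as a linear map ℝ² → ℝ²) equals s/(2r); and the linear map J⁻¹ • (T ∘ T*) (with T* the adjoint of T with respect to the Euclidean inner product) has determinant 1 and trace s/(s−1) + (s−1)/s. -/

import Mathlib

/-!
The derivative of a radial map `y ↦ φ(|y|) y / |y|` at `x` is diagonal with respect to
`ℝx ⊕ (ℝx)ᗮ`: it stretches radial vectors by `φ'(|x|)` and tangential ones by `φ(|x|) / |x|`.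
In the plane, an operator with radial and tangential stretches `a` and `b` has determinant `ab` and
pushes the conductivity `1` forward to the operator with stretches `a² / (ab) = a / b` and
`b² / (ab) = b / a`. For the blow-up map `φ(t) = t / 2 + 1`; with `s = φ(|x|)` these are
`(s - 1) / s` and `s / (s - 1)`.
-/

open Module Topology ComplexConjugate

section OrthogonalScaling

variable {𝕜 E : Type*} [RCLike 𝕜] [NormedAddCommGroup E] [InnerProductSpace 𝕜 E]

/-- The operator on `K ⊕ Kᗮ` that multiplies `K` by `a` and `Kᗮ` by `b`. With `K` the line through
`x`, these are the radial and tangential stretches of a radial map at `x`. -/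
noncomputable def orthogonalScaling (K : Submodule 𝕜 E) [K.HasOrthogonalProjection] (a b : 𝕜) :
    E →L[𝕜] E :=
  a • K.starProjection + b • Kᗮ.starProjection

variable (K : Submodule 𝕜 E) [K.HasOrthogonalProjection] (a b c d : 𝕜)

theorem smul_orthogonalScaling :
    c • orthogonalScaling K a b = orthogonalScaling K (c * a) (c * b) := by
  simp only [orthogonalScaling, smul_add, smul_smul]

theorem orthogonalScaling_comp_orthogonalScaling :
    orthogonalScaling K a b ∘L orthogonalScaling K c d = orthogonalScaling K (a * c) (b * d) := by
  have hK : K.starProjection ∘L K.starProjection = K.starProjection :=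
    K.isIdempotentElem_starProjection
  have hKc : Kᗮ.starProjection ∘L Kᗮ.starProjection = Kᗮ.starProjection :=
    Kᗮ.isIdempotentElem_starProjection
  have hKKc : K.starProjection ∘L Kᗮ.starProjection = 0 :=
    K.isOrtho_orthogonal_right.starProjection_comp_starProjection
  have hKcK : Kᗮ.starProjection ∘L K.starProjection = 0 :=
    K.isOrtho_orthogonal_left.starProjection_comp_starProjection
  simp only [orthogonalScaling, ContinuousLinearMap.add_comp, ContinuousLinearMap.comp_add,
    ContinuousLinearMap.smul_comp, ContinuousLinearMap.comp_smul, hK, hKc, hKKc, hKcK]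
  module

theorem adjoint_orthogonalScaling [CompleteSpace E] :
    (orthogonalScaling K a b).adjoint = orthogonalScaling K (conj a) (conj b) := by
  simp only [orthogonalScaling, map_add, map_smulₛₗ, (isSelfAdjoint_starProjection _).adjoint_eq]

theorem orthogonalScaling_eq_conj_prodMap :
    (orthogonalScaling K a b).toLinearMap =
      (K.prodEquivOfIsCompl Kᗮ K.isCompl_orthogonal).conj
        ((a • LinearMap.id).prodMap (b • LinearMap.id)) := by
  ext v
  simp [orthogonalScaling, LinearEquiv.conj_apply, -Submodule.starProjection_orthogonal_val,
    Submodule.starProjection_apply_eq_isComplProjection]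

variable [FiniteDimensional 𝕜 E]

theorem det_orthogonalScaling :
    LinearMap.det (orthogonalScaling K a b).toLinearMap = a ^ finrank 𝕜 K * b ^ finrank 𝕜 Kᗮ := by
  rw [orthogonalScaling_eq_conj_prodMap, LinearEquiv.conj_apply, LinearMap.comp_assoc,
    LinearMap.det_conj, LinearMap.det_prodMap]
  simp only [LinearMap.det_smul, LinearMap.det_id, mul_one]

theorem trace_orthogonalScaling :
    LinearMap.trace 𝕜 E (orthogonalScaling K a b).toLinearMap =
      a * finrank 𝕜 K + b * finrank 𝕜 Kᗮ := by
  rw [orthogonalScaling_eq_conj_prodMap, LinearMap.trace_conj', LinearMap.trace_prodMap']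
  simp only [map_smul, LinearMap.trace_id, smul_eq_mul]

end OrthogonalScaling

section RadialMap

variable {E : Type*} [NormedAddCommGroup E] [InnerProductSpace ℝ E] {x : E}

/-- The radial map with profile `φ`: it maps the sphere of radius `t > 0` about the origin to the
sphere of radius `|φ t|`. At the origin it has the junk value `0`. -/
noncomputable def radialMap (φ : ℝ → ℝ) (y : E) : E :=
  (φ ‖y‖ / ‖y‖) • y

theorem hasFDerivAt_norm (hx : x ≠ 0) : HasFDerivAt (‖·‖) (‖x‖⁻¹ • innerSL ℝ x) x := by
  have hsqrt := (hasStrictFDerivAt_norm_sq x).hasFDerivAt.sqrt (by simpa using hx)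
  simp only [Real.sqrt_sq (norm_nonneg _)] at hsqrt
  refine hsqrt.congr_fderiv ?_
  module

theorem hasFDerivAt_radialMap (hx : x ≠ 0) {φ : ℝ → ℝ} {φ' : ℝ} (hφ : HasDerivAt φ φ' ‖x‖) :
    HasFDerivAt (radialMap φ) (orthogonalScaling (ℝ ∙ x) φ' (φ ‖x‖ / ‖x‖)) x := by
  have hr : ‖x‖ ≠ 0 := norm_ne_zero_iff.mpr hx
  have hquot : HasFDerivAt (fun y : E ↦ φ ‖y‖ / ‖y‖)
      (((φ' * ‖x‖ - φ ‖x‖) / ‖x‖ ^ 2) • ‖x‖⁻¹ • innerSL ℝ x) x := by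
    simpa [Function.comp_def] using
      (hφ.fun_div (hasDerivAt_id ‖x‖) hr).comp_hasFDerivAt x (hasFDerivAt_norm hx)
  refine (hquot.fun_smul (hasFDerivAt_id x)).congr_fderiv ?_
  ext v
  simp only [orthogonalScaling, Submodule.starProjection_singleton,
    Submodule.starProjection_orthogonal_val, add_apply, smul_apply, id_eq, smul_eq_mul,
    ContinuousLinearMap.id_apply, ContinuousLinearMap.smulRight_apply, coe_innerSL_apply,
    Real.ringHom_apply]
  match_scalars
  · field_simp
  · field_simp
    ring

end RadialMap

section Conductivity

variable {E : Type*} [NormedAddCommGroup E] [InnerProductSpace ℝ E] [FiniteDimensional ℝ E]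

/-- The pushforward of the homogeneous conductivity `1` under a map with derivative `T`, as an
operator on tangent vectors. The sign of the Jacobian is kept, so for an orientation-reversing `T`
this is the negative of the pushforward with the factor `|det T|⁻¹`. -/
noncomputable def conductivityPushforward (T : E →L[ℝ] E) : E →L[ℝ] E :=
  (LinearMap.det T.toLinearMap)⁻¹ • (T ∘L T.adjoint)

theorem conductivityPushforward_orthogonalScaling {K : Submodule ℝ E} (hK : finrank ℝ K = 1)
    (hK' : finrank ℝ Kᗮ = 1) (a b : ℝ) :
    conductivityPushforward (orthogonalScaling K a b) = orthogonalScaling K (a / b) (b / a) := by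
  rw [conductivityPushforward, adjoint_orthogonalScaling, orthogonalScaling_comp_orthogonalScaling,
    smul_orthogonalScaling, det_orthogonalScaling, hK, hK']
  simp only [pow_one, conj_trivial]
  congr 1 <;> field_simp

theorem cloaking_conductivity_eigenvalues_general (hE : finrank ℝ E = 2) {x : E} (hx : x ≠ 0)
    {φ : ℝ → ℝ} {φ' : ℝ} (hφ : HasDerivAt φ φ' ‖x‖) (hφ₀ : φ ‖x‖ ≠ 0) (hφ' : φ' ≠ 0)
    {F : E → E} (hF : F =ᶠ[𝓝 x] radialMap φ) {T : E →L[ℝ] E} (hT : T = fderiv ℝ F x) :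
    DifferentiableAt ℝ F x ∧
    LinearMap.det T.toLinearMap = φ' * (φ ‖x‖ / ‖x‖) ∧
    LinearMap.det (conductivityPushforward T).toLinearMap = 1 ∧
    LinearMap.trace ℝ E (conductivityPushforward T).toLinearMap =
      φ ‖x‖ / (‖x‖ * φ') + ‖x‖ * φ' / φ ‖x‖ := by
  have hF' := (hasFDerivAt_radialMap hx hφ).congr_of_eventuallyEq hF
  have hrad : finrank ℝ (ℝ ∙ x) = 1 := finrank_span_singleton hx
  have htan : finrank ℝ (ℝ ∙ x)ᗮ = 1 :=
    haveI : Fact (finrank ℝ E = 1 + 1) := ⟨hE⟩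
    Submodule.finrank_orthogonal_span_singleton hx
  have hr : ‖x‖ ≠ 0 := norm_ne_zero_iff.mpr hx
  rw [hT, hF'.fderiv, conductivityPushforward_orthogonalScaling hrad htan]
  simp only [det_orthogonalScaling, trace_orthogonalScaling, hrad, htan, pow_one, Nat.cast_one,
    mul_one, true_and]
  refine ⟨hF'.differentiableAt, ?_, ?_⟩
  · field_simp
  · field_simp
    ring

end Conductivity

/-- the standard cloaking conductivity, formulas (1.13) and (1.15).
Define `F₀` on `ℝ² \ {0}` by `F₀(y) = ((‖y‖/2 + 1)/‖y‖) • y`. Fix `x ≠ 0`, set `r = ‖x‖`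
and `s = r/2 + 1`, and let `T` be the Fréchet derivative of `F₀` at `x`. Then `F₀` is
differentiable at `x`; the determinant `J` of `T` equals `s/(2r)`; and the linear map
`J⁻¹ • (T ∘ T*)` (with `T*` the Euclidean adjoint of `T`) has determinant `1` and trace
`s/(s−1) + (s−1)/s`. -/
theorem cloaking_conductivity_eigenvalues
    (x : EuclideanSpace ℝ (Fin 2)) (hx : x ≠ 0)
    (r s : ℝ) (hr : r = ‖x‖) (hs : s = r / 2 + 1)
    (F₀ : EuclideanSpace ℝ (Fin 2) → EuclideanSpace ℝ (Fin 2))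
    (hF₀ : ∀ y : EuclideanSpace ℝ (Fin 2), y ≠ 0 →
      F₀ y = ((‖y‖ / 2 + 1) / ‖y‖) • y)
    (T : EuclideanSpace ℝ (Fin 2) →L[ℝ] EuclideanSpace ℝ (Fin 2))
    (hT : T = fderiv ℝ F₀ x)
    (J : ℝ) (hJ : J = LinearMap.det T.toLinearMap)
    (A : EuclideanSpace ℝ (Fin 2) →L[ℝ] EuclideanSpace ℝ (Fin 2))
    (hA : A = J⁻¹ • (T ∘L ContinuousLinearMap.adjoint T)) :
    DifferentiableAt ℝ F₀ x ∧
    J = s / (2 * r) ∧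
    LinearMap.det A.toLinearMap = 1 ∧
    LinearMap.trace ℝ (EuclideanSpace ℝ (Fin 2)) A.toLinearMap
      = s / (s - 1) + (s - 1) / s := by
  have hF : F₀ =ᶠ[𝓝 x] radialMap fun t ↦ t / 2 + 1 := (isOpen_ne.eventually_mem hx).mono hF₀
  have hφ : HasDerivAt (fun t : ℝ ↦ t / 2 + 1) (1 / 2) ‖x‖ :=
    ((hasDerivAt_id _).div_const 2).add_const 1
  have hs₁ : s - 1 = ‖x‖ * (1 / 2) := by rw [hs, hr]; ring
  have hJ₁ : s / (2 * r) = 1 / 2 * (s / ‖x‖) := by rw [hr]; ring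
  rw [hs₁, hJ₁, hA, hJ, hs, hr]
  exact cloaking_conductivity_eigenvalues_general finrank_euclideanSpace_fin hx hφ
    (by positivity) (by norm_num) hF hT
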